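/- Let A = (a_{ij}) ∈ ℝ^{N×N} be a nonzero skew-symmetric matrix and t ≥ 0. With log Φ̃(t,A) := E log det(√t I_N + Y_A), where Y_A is built from i.i.d. standard Gaussians, one has log Φ(t,A) ≤ log Φ̃(t,A) + (N−1) C₁, where Φ(t,A) is the weighted matching polynomial (times √t if N is odd) and C₁ := −(1/√(2π)) ∫_ℝ log(x²) e^{−x²/2} dx. -/

import Mathlib

/-!
Write `s = √t` and let `D_S` be the principal minor of `s • 1 + Y_A` on the index set `S`. For an
index `i` below all of `S`, expanding the bordered determinant gives `D_{S ∪ {i}} = s D_S + uᵀ J u`,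
where `u` is row `i` of `Y_A` restricted to `S` and `J` is the adjugate of the block of
`s • 1 + Y_A` on `S`. The symmetric part of this block is `s • 1`, so `uᵀ J u ≥ 0` and `D_S ≥ 0`
(for `s = 0` by continuity). Conditionally on the other rows, `uᵀ J u` is a sum of squares of linear
forms in the Gaussians of row `i`, and `D_{S ∪ {i}}` has mean `s D_S + ∑_{j ∈ S} a_{ij}² D_{S ∖ j}`.
This is the recursion of the matching polynomial `F_S`, whence `E D_S = F_S`.

For a squared centred Gaussian, `E log` is the logarithm of the mean minus `C₁`. By concavity of the
logarithm, a sum of nonnegative variables each of which loses at most `K` in Jensen's inequality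
loses at most `K`, whatever their joint law. Applied to the conditional law of `D_{S ∪ {i}}`, this
shows that row `i` costs at most `C₁`; applied to the conditional mean, it carries the bound from
`D_S` and `D_{S ∖ j}` to `D_{S ∪ {i}}`. The first row added costs nothing, as a minor of size one is
the constant `s`, so that `N - 1` rows are paid for.
-/

open MeasureTheory ProbabilityTheory Matrix

/-- Total weighted `k`-matching of the weighted graph encoded by the
skew-symmetric matrix `A`. -/
noncomputable def phiW {N : ℕ} (A : Matrix (Fin N) (Fin N) ℝ) (k : ℕ) : ℝ :=
  ∑ M ∈ Finset.univ.filter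
      (fun M : Finset (Fin N × Fin N) =>
        ((∀ p ∈ M, p.1 < p.2) ∧
          ∀ p ∈ M, ∀ q ∈ M, p ≠ q →
            p.1 ≠ q.1 ∧ p.1 ≠ q.2 ∧ p.2 ≠ q.1 ∧ p.2 ≠ q.2) ∧ M.card = k),
    ∏ p ∈ M, (A p.1 p.2) ^ 2

/-- The weighted matching polynomial `Φ(t, A)`. -/
noncomputable def PhiW {N : ℕ} (A : Matrix (Fin N) (Fin N) ℝ) (t : ℝ) : ℝ :=
  ∑ k ∈ Finset.range (N / 2 + 1), phiW A k * t ^ (N / 2 - k)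

/-- `Φ(t,A)`, multiplied by `√t` when `N` is odd. -/
noncomputable def PhiFull {N : ℕ} (A : Matrix (Fin N) (Fin N) ℝ) (t : ℝ) : ℝ :=
  (if Even N then 1 else Real.sqrt t) * PhiW A t

/-- Index type of the strictly upper-triangular positions. -/
abbrev PairIdx (N : ℕ) := {p : Fin N × Fin N // p.1 < p.2}

/-- The canonical product of standard Gaussian measures, one for each edge slot. -/
noncomputable def gaussPi (N : ℕ) : Measure (PairIdx N → ℝ) :=
  Measure.pi fun _ => gaussianReal 0 1

/-- The sample `Y_A(ξ)` of the random skew-symmetric matrix `Y_A`. -/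
noncomputable def sampleY {N : ℕ} (A : Matrix (Fin N) (Fin N) ℝ)
    (ξ : PairIdx N → ℝ) : Matrix (Fin N) (Fin N) ℝ :=
  Matrix.of fun i j =>
    if h : i < j then A i j * ξ ⟨(i, j), h⟩
    else if h : j < i then A i j * ξ ⟨(j, i), h⟩
    else 0

/-- `log Φ̃(t, A) = E log det(√t I_N + Y_A)` for i.i.d. standard Gaussian entries. -/
noncomputable def logPhiTilde {N : ℕ} (t : ℝ) (A : Matrix (Fin N) (Fin N) ℝ) : ℝ :=
  ∫ ξ, Real.log ((Real.sqrt t • (1 : Matrix (Fin N) (Fin N) ℝ) + sampleY A ξ).det) ∂(gaussPi N)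

/-- The constant `C₁ = -(1/√(2π)) ∫ log(x²) e^{-x²/2} dx`. -/
noncomputable def C1 : ℝ :=
  -(Real.sqrt (2 * Real.pi))⁻¹ * ∫ x : ℝ, Real.log (x ^ 2) * Real.exp (-x ^ 2 / 2)

/-! ### Principal minors as determinants on a fixed index type -/

section PrincipalMinors

variable {ι R : Type*} [DecidableEq ι]

/-- `M` with the rows and columns outside `S` replaced by those of the identity matrix, so that its
determinant is the principal minor of `M` on `S`. Keeping the index type fixed lets minors on
different index sets be compared without casts. -/
def principalCut [Zero R] [One R] (M : Matrix ι ι R) (S : Finset ι) : Matrix ι ι R :=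
  of fun i j => if i ∈ S ∧ j ∈ S then M i j else (1 : Matrix ι ι R) i j

lemma principalCut_empty [Zero R] [One R] (M : Matrix ι ι R) : principalCut M ∅ = 1 := by
  ext; simp [principalCut]

lemma principalCut_congr [Zero R] [One R] {M M' : Matrix ι ι R} {S : Finset ι}
    (h : ∀ i ∈ S, ∀ j ∈ S, M i j = M' i j) : principalCut M S = principalCut M' S := by
  ext i j
  simp only [principalCut, of_apply]
  grind

variable [Fintype ι]

lemma principalCut_univ [Zero R] [One R] (M : Matrix ι ι R) :
    principalCut M Finset.univ = M := by
  ext; simp [principalCut]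

variable [CommRing R]

lemma det_principalCut_updateRow_single (M : Matrix ι ι R) (S : Finset ι) (i : ι) :
    ((principalCut M S).updateRow i (Pi.single i 1)).det = (principalCut M (S.erase i)).det := by
  refine det_eq_of_forall_row_eq_smul_add_const
    (fun k => if k = i then 0 else principalCut M S k i) i (by simp) fun k l => ?_
  simp only [principalCut, updateRow_apply, of_apply, one_apply, Pi.single_apply,
    Finset.mem_erase]
  grind

lemma adjugate_principalCut_apply_self (M : Matrix ι ι R) (S : Finset ι) (i : ι) :
    (principalCut M S).adjugate i i = (principalCut M (S.erase i)).det := by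
  rw [adjugate_apply, det_principalCut_updateRow_single]

/-- Exchanging the columns `i` and `j` turns one determinant into the other, up to the entries of
column `i`, which the unit row `i` clears. -/
lemma adjugate_principalCut_insert_apply (M : Matrix ι ι R) {S : Finset ι} {i j : ι}
    (hi : i ∉ S) (hj : j ∈ S) :
    (principalCut M (insert i S)).adjugate j i =
      -((principalCut M S).adjugate *ᵥ S.piecewise (fun k => M k i) 0) j := by
  have hij : i ≠ j := fun h => hi (h ▸ hj)
  rw [← cramer_eq_adjugate_mulVec, cramer_apply, adjugate_apply, ← neg_eq_iff_eq_neg]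
  have hswap := det_permute' (Equiv.swap i j)
    ((principalCut M (insert i S)).updateRow i (Pi.single j 1))
  rw [Equiv.Perm.sign_swap hij] at hswap
  simp only [Units.val_neg, Units.val_one, Int.cast_neg, Int.cast_one, neg_mul, one_mul] at hswap
  rw [← hswap]
  refine det_eq_of_forall_row_eq_smul_add_const
    (fun k => if k ∈ S then M k j else 0) i (by simp [hi]) fun k l => ?_
  simp only [principalCut, submatrix_apply, updateRow_apply, updateCol_apply, of_apply, one_apply,
    Finset.piecewise, Equiv.swap_apply_def, Pi.single_apply, Finset.mem_insert, id, Pi.zero_apply]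
  grind

lemma det_principalCut_insert (M : Matrix ι ι R) {S : Finset ι} {i : ι} (hi : i ∉ S) :
    (principalCut M (insert i S)).det = M i i * (principalCut M S).det
      - S.piecewise (M i) 0 ⬝ᵥ
        ((principalCut M S).adjugate *ᵥ S.piecewise (fun k => M k i) 0) := by
  have hrow : ∀ j, principalCut M (insert i S) i j = if j ∈ insert i S then M i j else 0 := by
    intro j
    simp only [principalCut, of_apply, one_apply]
    grind
  have hdiag := adjugate_principalCut_apply_self M (insert i S) i
  rw [Finset.erase_insert hi] at hdiag
  simp only [det_eq_sum_mul_adjugate_row _ i, hrow, dotProduct, Finset.piecewise, Pi.zero_apply,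
    ite_mul, zero_mul, Finset.sum_ite_mem, Finset.univ_inter, Finset.sum_insert hi, hdiag,
    sub_eq_add_neg, ← Finset.sum_neg_distrib, ← mul_neg]
  congr 1
  refine Finset.sum_congr rfl fun j hj => ?_
  rw [adjugate_principalCut_insert_apply M hi hj]

lemma det_principalCut_smul_one_add_insert [NoZeroDivisors R] [CharZero R] {B : Matrix ι ι R}
    (hB : Bᵀ = -B) (s : R) {S : Finset ι} {i : ι} (hi : i ∉ S) :
    (principalCut (s • 1 + B) (insert i S)).det = s * (principalCut (s • 1 + B) S).det
      + S.piecewise (B i) 0 ⬝ᵥ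
        ((principalCut (s • 1 + B) S).adjugate *ᵥ S.piecewise (B i) 0) := by
  have hskew : ∀ k, B k i = -B i k := fun k => congrFun (congrFun hB i) k
  have hdiag : B i i = 0 := CharZero.eq_neg_self_iff.mp (hskew i)
  have hrow : S.piecewise ((s • 1 + B) i) 0 = S.piecewise (B i) 0 := by
    ext k
    by_cases hk : k ∈ S
    · simp [hk, one_apply_ne (ne_of_mem_of_not_mem hk hi).symm]
    · simp [hk]
  have hcol : S.piecewise (fun k => (s • 1 + B) k i) 0 = -S.piecewise (B i) 0 := by
    ext k
    by_cases hk : k ∈ S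
    · simp [hk, one_apply_ne (ne_of_mem_of_not_mem hk hi), hskew]
    · simp [hk]
  rw [det_principalCut_insert _ hi, hrow, hcol, mulVec_neg, dotProduct_neg, sub_neg_eq_add]
  simp [hdiag]

end PrincipalMinors

/-! ### Matrices with positive semidefinite symmetric part -/

section Accretive

variable {ι : Type*} [Fintype ι]

/-- The real matrix `M` has a positive semidefinite symmetric part; `M` itself need not be
symmetric, as it would be for `Matrix.PosSemidef`. -/
def IsAccretive (M : Matrix ι ι ℝ) : Prop :=
  ∀ x : ι → ℝ, 0 ≤ x ⬝ᵥ M *ᵥ x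

lemma dotProduct_transpose_mul_mul_mulVec {κ R : Type*} [Fintype κ] [CommSemiring R]
    (M : Matrix ι ι R) (T : Matrix ι κ R) (x : κ → R) :
    x ⬝ᵥ (Tᵀ * M * T) *ᵥ x = T *ᵥ x ⬝ᵥ M *ᵥ (T *ᵥ x) := by
  rw [← mulVec_mulVec, ← mulVec_mulVec, dotProduct_mulVec, vecMul_transpose]

namespace IsAccretive

lemma add {M M' : Matrix ι ι ℝ} (hM : IsAccretive M) (hM' : IsAccretive M') :
    IsAccretive (M + M') := fun x => by
  simpa only [add_mulVec, dotProduct_add] using add_nonneg (hM x) (hM' x)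

lemma smul {M : Matrix ι ι ℝ} (hM : IsAccretive M) {c : ℝ} (hc : 0 ≤ c) :
    IsAccretive (c • M) := fun x => by
  simpa only [smul_mulVec, dotProduct_smul, smul_eq_mul] using mul_nonneg hc (hM x)

lemma of_transpose_eq_neg {M : Matrix ι ι ℝ} (hM : Mᵀ = -M) : IsAccretive M := fun x => by
  have hneg : x ⬝ᵥ M *ᵥ x = -(x ⬝ᵥ M *ᵥ x) := by
    conv_lhs => rw [dotProduct_mulVec, ← mulVec_transpose, hM, neg_mulVec, neg_dotProduct,
      dotProduct_comm]
  exact (self_eq_neg.mp hneg).ge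

lemma transpose_mul_mul {κ : Type*} [Fintype κ] {M : Matrix ι ι ℝ} (hM : IsAccretive M)
    (T : Matrix ι κ ℝ) : IsAccretive (Tᵀ * M * T) := fun x => by
  simpa only [dotProduct_transpose_mul_mul_mulVec] using hM (T *ᵥ x)

variable [DecidableEq ι]

protected lemma one : IsAccretive (1 : Matrix ι ι ℝ) := fun x => by
  simpa only [one_mulVec] using star_trivial x ▸ dotProduct_star_self_nonneg x

lemma principalCut {M : Matrix ι ι ℝ} (hM : IsAccretive M) (S : Finset ι) :
    IsAccretive (principalCut M S) := fun x => by
  have hsplit : x ⬝ᵥ _root_.principalCut M S *ᵥ x =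
      S.piecewise x 0 ⬝ᵥ M *ᵥ S.piecewise x 0 + S.piecewise 0 x ⬝ᵥ S.piecewise 0 x := by
    simp only [dotProduct, mulVec, _root_.principalCut, of_apply, one_apply,
      ← Finset.sum_add_distrib, Finset.piecewise, Pi.zero_apply]
    refine Finset.sum_congr rfl fun i _ => ?_
    by_cases hi : i ∈ S
    · simp only [hi, true_and, if_true, mul_zero, add_zero]
      congr 1
      refine Finset.sum_congr rfl fun j _ => ?_
      grind
    · simp [hi]
  rw [hsplit]
  exact add_nonneg (hM _) (dotProduct_self_star_nonneg _)

lemma det_add_smul_one_ne_zero {M : Matrix ι ι ℝ} (hM : IsAccretive M) {ε : ℝ} (hε : 0 < ε) :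
    (M + ε • 1).det ≠ 0 := fun hdet => by
  obtain ⟨x, hx0, hx⟩ := exists_mulVec_eq_zero_iff.mpr hdet
  have hquad : x ⬝ᵥ M *ᵥ x + ε * (x ⬝ᵥ x) = 0 := by
    simpa [add_mulVec, smul_mulVec] using congrArg (x ⬝ᵥ ·) hx
  have hpos : 0 < x ⬝ᵥ x := dotProduct_self_star_pos_iff.mpr hx0
  linarith [hM x, mul_pos hε hpos]

lemma det_nonneg {M : Matrix ι ι ℝ} (hM : IsAccretive M) : 0 ≤ M.det := by
  by_contra! hneg
  have hcont : Continuous fun r : ℝ => (r • M + (1 - r) • 1).det := by fun_prop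
  obtain ⟨r, ⟨hr0, hr1⟩, hr⟩ := intermediate_value_Icc' zero_le_one hcont.continuousOn
    (show (0 : ℝ) ∈ _ by simpa using hneg.le)
  rcases hr1.eq_or_lt with rfl | hr1
  · simp [hneg.ne] at hr
  · exact (hM.smul hr0).det_add_smul_one_ne_zero (sub_pos.mpr hr1) hr

lemma adjugate {M : Matrix ι ι ℝ} (hM : IsAccretive M) : IsAccretive M.adjugate := fun x => by
  have hperturbed : ∀ ε > (0 : ℝ), 0 ≤ x ⬝ᵥ (M + ε • 1).adjugate *ᵥ x := fun ε hε => by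
    have hacc := hM.add (IsAccretive.one.smul hε.le)
    have hdet := hacc.det_nonneg.lt_of_ne' (hM.det_add_smul_one_ne_zero hε)
    have hquad := hacc ((M + ε • 1).adjugate *ᵥ x)
    rw [mulVec_mulVec, mul_adjugate, smul_mulVec, one_mulVec, dotProduct_smul, smul_eq_mul,
      dotProduct_comm] at hquad
    exact nonneg_of_mul_nonneg_right hquad hdet
  have hcont : Continuous fun ε : ℝ => x ⬝ᵥ (M + ε • 1).adjugate *ᵥ x := by fun_prop
  have hlim := (hcont.tendsto 0).mono_left (nhdsWithin_le_nhds (s := Set.Ioi 0))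
  simp only [zero_smul, add_zero] at hlim
  exact ge_of_tendsto hlim (eventually_mem_nhdsWithin.mono hperturbed)

end IsAccretive

end Accretive

/-! ### The Jensen gap of the logarithm -/

section LogGap

open scoped ENNReal

/-- The gap `x - 1 - log x` in the inequality `log x ≤ x - 1`, with value `∞` for `x ≤ 0`. For a
variable of mean one its expectation is the Jensen gap of the logarithm; taking values in `[0, ∞]`
makes this meaningful without any integrability. -/
noncomputable def logGap (x : ℝ) : ℝ≥0∞ :=
  if 0 < x then ENNReal.ofReal (x - 1 - Real.log x) else ∞

lemma logGap_of_pos {x : ℝ} (hx : 0 < x) : logGap x = ENNReal.ofReal (x - 1 - Real.log x) :=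
  if_pos hx

lemma logGap_of_nonpos {x : ℝ} (hx : x ≤ 0) : logGap x = ∞ :=
  if_neg hx.not_gt

lemma logGap_one : logGap 1 = 0 := by
  simp [logGap]

@[fun_prop]
lemma measurable_logGap : Measurable logGap :=
  Measurable.ite measurableSet_Ioi (by fun_prop) measurable_const

lemma sub_one_sub_log_nonneg {x : ℝ} (hx : 0 < x) : 0 ≤ x - 1 - Real.log x :=
  sub_nonneg.mpr (Real.log_le_sub_one_of_pos hx)

lemma logGap_convexComb_le {p q : ℝ} (hp : 0 < p) (hq : 0 < q) (hpq : p + q = 1) (x y : ℝ) :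
    logGap (p * x + q * y) ≤ ENNReal.ofReal p * logGap x + ENNReal.ofReal q * logGap y := by
  rcases le_or_gt x 0 with hx | hx
  · simp [logGap_of_nonpos hx, ENNReal.mul_top, hp]
  rcases le_or_gt y 0 with hy | hy
  · simp [logGap_of_nonpos hy, ENNReal.mul_top, hq]
  have hlog : p * Real.log x + q * Real.log y ≤ Real.log (p * x + q * y) := by
    simpa using strictConcaveOn_log_Ioi.concaveOn.2 hx hy hp.le hq.le hpq
  have hx0 := sub_one_sub_log_nonneg hx
  have hy0 := sub_one_sub_log_nonneg hy
  rw [logGap_of_pos hx, logGap_of_pos hy, logGap_of_pos (by positivity), ← ENNReal.ofReal_mul hp.le,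
    ← ENNReal.ofReal_mul hq.le, ← ENNReal.ofReal_add (by positivity) (by positivity)]
  exact ENNReal.ofReal_le_ofReal (by linarith)

/-- The linear terms are spread over both sides, so that no subtraction in `[0, ∞]` occurs. -/
lemma logGap_mul {r : ℝ} (hr : 0 < r) (x : ℝ) :
    logGap (r * x) + (ENNReal.ofReal x + ENNReal.ofReal r) =
      logGap r + logGap x + (ENNReal.ofReal (r * x) + 1) := by
  rcases le_or_gt x 0 with hx | hx
  · simp [logGap_of_nonpos hx, logGap_of_nonpos (mul_nonpos_of_nonneg_of_nonpos hr.le hx)]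
  have hx0 := sub_one_sub_log_nonneg hx
  have hr0 := sub_one_sub_log_nonneg hr
  have hrx0 := sub_one_sub_log_nonneg (mul_pos hr hx)
  rw [logGap_of_pos hx, logGap_of_pos hr, logGap_of_pos (mul_pos hr hx), ← ENNReal.ofReal_one]
  rw [← ENNReal.ofReal_add, ← ENNReal.ofReal_add, ← ENNReal.ofReal_add, ← ENNReal.ofReal_add,
    ← ENNReal.ofReal_add, Real.log_mul hr.ne' hx.ne']
  · ring_nf
  all_goals positivity

variable {Ω : Type*} [MeasurableSpace Ω] {μ : Measure Ω}

/-- `X` is a nonnegative random variable with mean `m` for which the logarithm loses at most `K` in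
Jensen's inequality, that is `log m ≤ E log X + K`. For `m = 0` only `X = 0` almost surely
remains. -/
structure LogGapLE (μ : Measure Ω) (X : Ω → ℝ) (m : ℝ) (K : ℝ≥0∞) : Prop where
  measurable : Measurable X
  nonneg : 0 ≤ X
  mean_nonneg : 0 ≤ m
  lintegral_eq : ∫⁻ ω, ENNReal.ofReal (X ω) ∂μ = ENNReal.ofReal m
  lintegral_logGap_le : 0 < m → ∫⁻ ω, logGap (X ω / m) ∂μ ≤ K

namespace LogGapLE

variable {X Y : Ω → ℝ} {m n : ℝ} {K K' : ℝ≥0∞}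

lemma mono (hX : LogGapLE μ X m K) (hK : K ≤ K') : LogGapLE μ X m K' :=
  { hX with lintegral_logGap_le := fun hm => (hX.lintegral_logGap_le hm).trans hK }

lemma const [IsProbabilityMeasure μ] {c : ℝ} (hc : 0 ≤ c) : LogGapLE μ (fun _ => c) c 0 where
  measurable := measurable_const
  nonneg _ := hc
  mean_nonneg := hc
  lintegral_eq := by simp
  lintegral_logGap_le hpos := by simp [div_self hpos.ne', logGap_one]

lemma zero : LogGapLE μ (fun _ => 0) 0 K where
  measurable := measurable_const
  nonneg _ := le_rfl
  mean_nonneg := le_rfl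
  lintegral_eq := by simp
  lintegral_logGap_le hpos := hpos.false.elim

lemma const_mul (hX : LogGapLE μ X m K) {c : ℝ} (hc : 0 ≤ c) :
    LogGapLE μ (fun ω => c * X ω) (c * m) K where
  measurable := hX.measurable.const_mul c
  nonneg ω := mul_nonneg hc (hX.nonneg ω)
  mean_nonneg := mul_nonneg hc hX.mean_nonneg
  lintegral_eq := by
    simp only [ENNReal.ofReal_mul hc]
    rw [lintegral_const_mul _ hX.measurable.ennreal_ofReal, hX.lintegral_eq]
  lintegral_logGap_le hpos := by
    have hc' : c ≠ 0 := left_ne_zero_of_mul hpos.ne'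
    simp only [mul_div_mul_left _ _ hc']
    exact hX.lintegral_logGap_le (pos_of_mul_pos_right hpos hc)

lemma ae_eq_zero (hX : LogGapLE μ X 0 K) : X =ᵐ[μ] 0 := by
  have hzero := hX.lintegral_eq
  rw [ENNReal.ofReal_zero, lintegral_eq_zero_iff hX.measurable.ennreal_ofReal] at hzero
  filter_upwards [hzero] with ω hω
  exact le_antisymm (ENNReal.ofReal_eq_zero.mp hω) (hX.nonneg ω)

lemma lintegral_logGap_add_le (hX : LogGapLE μ X m K) (hY : LogGapLE μ Y n K)
    (hm : 0 < m) (hn : 0 < n) : ∫⁻ ω, logGap ((X ω + Y ω) / (m + n)) ∂μ ≤ K := by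
  have hmn : 0 < m + n := add_pos hm hn
  have hweights : m / (m + n) + n / (m + n) = 1 := by rw [← add_div, div_self hmn.ne']
  have hXm := hX.measurable
  have hYm := hY.measurable
  calc ∫⁻ ω, logGap ((X ω + Y ω) / (m + n)) ∂μ
      = ∫⁻ ω, logGap (m / (m + n) * (X ω / m) + n / (m + n) * (Y ω / n)) ∂μ := by
        refine lintegral_congr fun ω => congrArg logGap ?_
        field_simp
    _ ≤ ∫⁻ ω, (ENNReal.ofReal (m / (m + n)) * logGap (X ω / m)
          + ENNReal.ofReal (n / (m + n)) * logGap (Y ω / n)) ∂μ :=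
        lintegral_mono fun ω =>
          logGap_convexComb_le (div_pos hm hmn) (div_pos hn hmn) hweights _ _
    _ = ENNReal.ofReal (m / (m + n)) * ∫⁻ ω, logGap (X ω / m) ∂μ
          + ENNReal.ofReal (n / (m + n)) * ∫⁻ ω, logGap (Y ω / n) ∂μ := by
        rw [lintegral_add_left (by fun_prop), lintegral_const_mul _ (by fun_prop),
          lintegral_const_mul _ (by fun_prop)]
    _ ≤ ENNReal.ofReal (m / (m + n)) * K + ENNReal.ofReal (n / (m + n)) * K :=
        add_le_add (mul_le_mul_right (hX.lintegral_logGap_le hm) _)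
          (mul_le_mul_right (hY.lintegral_logGap_le hn) _)
    _ = K := by
        rw [← add_mul, ← ENNReal.ofReal_add (by positivity) (by positivity), hweights,
          ENNReal.ofReal_one, one_mul]

lemma add (hX : LogGapLE μ X m K) (hY : LogGapLE μ Y n K) :
    LogGapLE μ (fun ω => X ω + Y ω) (m + n) K where
  measurable := hX.measurable.add hY.measurable
  nonneg ω := add_nonneg (hX.nonneg ω) (hY.nonneg ω)
  mean_nonneg := add_nonneg hX.mean_nonneg hY.mean_nonneg
  lintegral_eq := by
    simp only [ENNReal.ofReal_add (hX.nonneg _) (hY.nonneg _)]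
    rw [lintegral_add_left hX.measurable.ennreal_ofReal, hX.lintegral_eq, hY.lintegral_eq,
      ENNReal.ofReal_add hX.mean_nonneg hY.mean_nonneg]
  lintegral_logGap_le hpos := by
    rcases hX.mean_nonneg.eq_or_lt with rfl | hm
    · refine (lintegral_congr_ae ?_).trans_le (hY.lintegral_logGap_le (by simpa using hpos))
      filter_upwards [hX.ae_eq_zero] with ω hω
      simp [hω]
    rcases hY.mean_nonneg.eq_or_lt with rfl | hn
    · refine (lintegral_congr_ae ?_).trans_le (hX.lintegral_logGap_le hm)
      filter_upwards [hY.ae_eq_zero] with ω hω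
      simp [hω]
    exact hX.lintegral_logGap_add_le hY hm hn

lemma sum {κ : Type*} (T : Finset κ) {X : κ → Ω → ℝ} {m : κ → ℝ}
    (hX : ∀ k ∈ T, LogGapLE μ (X k) (m k) K) :
    LogGapLE μ (fun ω => ∑ k ∈ T, X k ω) (∑ k ∈ T, m k) K := by
  classical
  induction T using Finset.induction_on with
  | empty => simpa using zero
  | insert k T hk ih =>
    simp only [Finset.sum_insert hk]
    exact (hX k (Finset.mem_insert_self k T)).add
      (ih fun j hj => hX j (Finset.mem_insert_of_mem hj))

lemma of_map {Ω' : Type*} [MeasurableSpace Ω'] {f : Ω' → Ω} {ν : Measure Ω'}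
    (hf : Measurable f) (hX : LogGapLE (ν.map f) X m K) :
    LogGapLE ν (fun ω => X (f ω)) m K where
  measurable := hX.measurable.comp hf
  nonneg ω := hX.nonneg (f ω)
  mean_nonneg := hX.mean_nonneg
  lintegral_eq := by
    rw [← hX.lintegral_eq, lintegral_map hX.measurable.ennreal_ofReal hf]
  lintegral_logGap_le hpos := by
    rw [← lintegral_map (f := fun x => logGap (X x / m))
      (measurable_logGap.comp (hX.measurable.div_const m)) hf]
    exact hX.lintegral_logGap_le hpos

lemma lintegral_logGap_div_le [IsProbabilityMeasure μ] (hX : LogGapLE μ X m K) {M : ℝ}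
    (hM : 0 < M) : ∫⁻ ω, logGap (X ω / M) ∂μ ≤ logGap (m / M) + K := by
  rcases hX.mean_nonneg.eq_or_lt with rfl | hm
  · simp [logGap_of_nonpos le_rfl]
  have hr : 0 < m / M := div_pos hm hM
  have hXm := hX.measurable
  have hmean : ∀ c > 0, ∫⁻ ω, ENNReal.ofReal (X ω / c) ∂μ = ENNReal.ofReal (m / c) := by
    intro c hc
    simpa only [div_eq_inv_mul] using (hX.const_mul (inv_nonneg.mpr hc.le)).lintegral_eq
  have hidentity := lintegral_congr (μ := μ) fun ω => logGap_mul hr (X ω / m)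
  simp only [div_mul_div_cancel₀' hm.ne' M] at hidentity
  rw [lintegral_add_right _ (by fun_prop), lintegral_add_right _ (by fun_prop),
    lintegral_add_right _ (by fun_prop), lintegral_add_right _ (by fun_prop),
    lintegral_add_left (by fun_prop), hmean m hm, hmean M hM] at hidentity
  simp only [div_self hm.ne', ENNReal.ofReal_one, lintegral_const, measure_univ, mul_one,
    add_comm (1 : ℝ≥0∞)] at hidentity
  rw [ENNReal.add_left_inj (by finiteness)] at hidentity
  rw [hidentity]
  exact add_le_add le_rfl (hX.lintegral_logGap_le hm)

/-- Tower property: averaging `X` over the coordinates in `s` loses at most `K`, and averaging the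
conditional mean `g` over the remaining ones at most `K'`. -/
lemma of_updateFinset {δ : Type*} [Fintype δ] [DecidableEq δ] {E : δ → Type*}
    [∀ i, MeasurableSpace (E i)] {μ : ∀ i, Measure (E i)} [∀ i, IsProbabilityMeasure (μ i)]
    (s : Finset δ) {X g : (∀ i, E i) → ℝ} (hX : Measurable X)
    (hcond : ∀ x, LogGapLE (Measure.pi fun i : s => μ i)
      (fun y => X (Function.updateFinset x s y)) (g x) K)
    (hg : LogGapLE (Measure.pi μ) g m K') :
    LogGapLE (Measure.pi μ) X m (K' + K) := by
  have hgm := hg.measurable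
  have hg_update : ∀ x y, g (Function.updateFinset x s y) = g x := fun x y => by
    have hmean := (hcond (Function.updateFinset x s y)).lintegral_eq
    simp only [Function.updateFinset_updateFinset_of_subset subset_rfl] at hmean
    rw [(hcond x).lintegral_eq, ENNReal.ofReal_eq_ofReal_iff (hg.nonneg _) (hg.nonneg _)] at hmean
    exact hmean.symm
  refine ⟨hX, fun x => ?_, hg.mean_nonneg, ?_, fun hm => ?_⟩
  · simpa using (hcond x).nonneg (s.restrict x)
  · rw [← hg.lintegral_eq]
    refine lintegral_eq_of_lmarginal_eq s (by fun_prop) (by fun_prop) (funext fun x => ?_)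
    simp [lmarginal, (hcond x).lintegral_eq, hg_update]
  calc ∫⁻ x, logGap (X x / m) ∂Measure.pi μ
      ≤ ∫⁻ x, (logGap (g x / m) + K) ∂Measure.pi μ := by
        refine lintegral_le_of_lmarginal_le s (by fun_prop) (by fun_prop) fun x => ?_
        simpa [lmarginal, hg_update] using (hcond x).lintegral_logGap_div_le hm
    _ = ∫⁻ x, logGap (g x / m) ∂Measure.pi μ + K := by
        rw [lintegral_add_right _ measurable_const]; simp
    _ ≤ K' + K := add_le_add (hg.lintegral_logGap_le hm) le_rfl

lemma integrable (hX : LogGapLE μ X m K) : Integrable X μ :=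
  (lintegral_ofReal_ne_top_iff_integrable hX.measurable.aestronglyMeasurable
    (.of_forall hX.nonneg)).mp (hX.lintegral_eq ▸ ENNReal.ofReal_ne_top)

lemma integral_eq (hX : LogGapLE μ X m K) : ∫ ω, X ω ∂μ = m := by
  rw [integral_eq_lintegral_of_nonneg_ae (.of_forall hX.nonneg)
    hX.measurable.aestronglyMeasurable, hX.lintegral_eq, ENNReal.toReal_ofReal hX.mean_nonneg]

lemma ae_pos (hX : LogGapLE μ X m K) (hm : 0 < m) (hK : K ≠ ∞) : ∀ᵐ ω ∂μ, 0 < X ω := by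
  have hXm := hX.measurable
  filter_upwards [ae_lt_top (by fun_prop)
    (ne_top_of_le_ne_top hK (hX.lintegral_logGap_le hm))] with ω hω
  by_contra! hneg
  exact hω.ne (logGap_of_nonpos (div_nonpos_of_nonpos_of_nonneg hneg hm.le))

lemma log_le_integral_log_add [IsProbabilityMeasure μ] (hX : LogGapLE μ X m K) (hK : K ≠ ∞) :
    Real.log m ≤ ∫ ω, Real.log (X ω) ∂μ + K.toReal := by
  rcases hX.mean_nonneg.eq_or_lt with rfl | hm
  · have hlog : (fun ω => Real.log (X ω)) =ᵐ[μ] 0 := by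
      filter_upwards [hX.ae_eq_zero] with ω hω
      simp [hω]
    simp [integral_congr_ae hlog]
  have hXm := hX.measurable
  have hpos := hX.ae_pos hm hK
  have hgap : ∀ᵐ ω ∂μ, logGap (X ω / m) = ENNReal.ofReal (X ω / m - 1 - Real.log (X ω / m)) :=
    hpos.mono fun ω hω => logGap_of_pos (div_pos hω hm)
  have hgap_nonneg : ∀ᵐ ω ∂μ, 0 ≤ X ω / m - 1 - Real.log (X ω / m) :=
    hpos.mono fun ω hω => sub_one_sub_log_nonneg (div_pos hω hm)
  have hgap_le := hX.lintegral_logGap_le hm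
  rw [lintegral_congr_ae hgap] at hgap_le
  have hgap_integrable : Integrable (fun ω => X ω / m - 1 - Real.log (X ω / m)) μ :=
    (lintegral_ofReal_ne_top_iff_integrable (by fun_prop) hgap_nonneg).mp
      (ne_top_of_le_ne_top hK hgap_le)
  have hgap_integral : ∫ ω, (X ω / m - 1 - Real.log (X ω / m)) ∂μ ≤ K.toReal := by
    rw [integral_eq_lintegral_of_nonneg_ae hgap_nonneg (by fun_prop)]
    exact ENNReal.toReal_mono hK hgap_le
  have hlog : ∀ᵐ ω ∂μ, Real.log (X ω) =
      X ω / m - 1 - (X ω / m - 1 - Real.log (X ω / m)) + Real.log m := by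
    filter_upwards [hpos] with ω hω
    rw [Real.log_div hω.ne' hm.ne']
    ring
  have hX_div := hX.integrable.div_const m
  rw [integral_congr_ae hlog, integral_add (by fun_prop) (by fun_prop),
    integral_sub (by fun_prop) hgap_integrable, integral_sub hX_div (by fun_prop), integral_div,
    hX.integral_eq, div_self hm.ne']
  simp only [integral_const, probReal_univ, one_smul]
  linarith

end LogGapLE

end LogGap

/-! ### Quadratic forms in Gaussian variables -/

section Gaussian

open scoped ENNReal NNReal

lemma integrable_log_sq_mul {f : ℝ → ℝ} {c : ℝ} (hf : Measurable f) (hfc : ∀ x, |f x| ≤ c)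
    (hf2 : Integrable fun x => x ^ 2 * f x) : Integrable fun x => Real.log (x ^ 2) * f x := by
  have hnear : IntegrableOn (fun x => Real.log (x ^ 2) * f x) (Set.Ioc (-1) 1) := by
    have hlog : IntegrableOn Real.log (Set.Ioc (-1) 1) :=
      (intervalIntegrable_iff_integrableOn_Ioc_of_le (by norm_num)).mp
        intervalIntegral.intervalIntegrable_log'
    simp only [Real.log_pow]
    exact (hlog.const_mul _).mul_bdd hf.aestronglyMeasurable (.of_forall hfc)
  have hfar : IntegrableOn (fun x => Real.log (x ^ 2) * f x) (Set.Ioc (-1) 1)ᶜ := by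
    refine Integrable.mono hf2.integrableOn (by fun_prop)
      (ae_restrict_of_forall_mem measurableSet_Ioc.compl fun x hx => ?_)
    have hx1 : 1 ≤ x ^ 2 := by
      rw [one_le_sq_iff_one_le_abs, le_abs]
      grind
    rw [norm_mul, norm_mul]
    gcongr
    rw [Real.norm_of_nonneg (Real.log_nonneg hx1), Real.norm_of_nonneg (by positivity)]
    linarith [Real.log_le_sub_one_of_pos (one_pos.trans_le hx1)]
  simpa using hnear.union hfar

lemma integrable_sq_gaussianReal (m : ℝ) (v : ℝ≥0) :
    Integrable (fun x => x ^ 2) (gaussianReal m v) :=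
  (memLp_id_gaussianReal 2).integrable_sq

lemma integrable_log_sq_gaussianReal (m : ℝ) {v : ℝ≥0} (hv : v ≠ 0) :
    Integrable (fun x => Real.log (x ^ 2)) (gaussianReal m v) := by
  have hsq := integrable_sq_gaussianReal m v
  have hlt : ∀ᵐ x : ℝ, gaussianPDF m v x < ∞ := .of_forall fun _ => gaussianPDF_lt_top
  rw [gaussianReal_of_var_ne_zero m hv, integrable_withDensity_iff (measurable_gaussianPDF m v) hlt]
    at hsq ⊢
  simp only [toReal_gaussianPDF] at hsq ⊢
  refine integrable_log_sq_mul (c := (√(2 * Real.pi * v))⁻¹) (measurable_gaussianPDFReal m v)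
    (fun x => ?_) hsq
  rw [abs_of_nonneg (gaussianPDFReal_nonneg m v x)]
  refine mul_le_of_le_one_right (by positivity) (Real.exp_le_one_iff.mpr ?_)
  exact div_nonpos_of_nonpos_of_nonneg (neg_nonpos.mpr (sq_nonneg _)) (by positivity)

lemma integral_log_sq_gaussianReal : ∫ x, Real.log (x ^ 2) ∂gaussianReal 0 1 = -C1 := by
  rw [integral_gaussianReal_eq_integral_smul one_ne_zero, C1, neg_mul, neg_neg,
    ← integral_const_mul]
  refine integral_congr_ae (.of_forall fun x => ?_)
  simp only [gaussianPDFReal, NNReal.coe_one, mul_one, sub_zero, smul_eq_mul]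
  ring

lemma integral_sq_gaussianReal (v : ℝ≥0) : ∫ x, x ^ 2 ∂gaussianReal 0 v = v := by
  have hvar := variance_fun_id_gaussianReal (μ := 0) (v := v)
  rw [variance_eq_integral (by fun_prop)] at hvar
  simpa using hvar

lemma integral_sq_sub_one_sub_log_sq_gaussianReal :
    ∫ x, (x ^ 2 - 1 - Real.log (x ^ 2)) ∂gaussianReal 0 1 = C1 := by
  have hsq := integrable_sq_gaussianReal 0 1
  rw [integral_sub (by fun_prop) (integrable_log_sq_gaussianReal 0 one_ne_zero),
    integral_sub hsq (by fun_prop), integral_sq_gaussianReal, integral_log_sq_gaussianReal]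
  simp

lemma ae_ne_zero_gaussianReal (m : ℝ) {v : ℝ≥0} (hv : v ≠ 0) : ∀ᵐ x ∂gaussianReal m v, x ≠ 0 := by
  have := nullSingletonClass_gaussianReal (μ := m) hv
  simp [ae_iff]

lemma C1_nonneg : 0 ≤ C1 := by
  rw [← integral_sq_sub_one_sub_log_sq_gaussianReal]
  refine integral_nonneg_of_ae ?_
  filter_upwards [ae_ne_zero_gaussianReal 0 one_ne_zero] with x hx
  exact sub_one_sub_log_nonneg (by positivity)

lemma lintegral_ofReal_sq_gaussianReal (v : ℝ≥0) :
    ∫⁻ x, ENNReal.ofReal (x ^ 2) ∂gaussianReal 0 v = ENNReal.ofReal v := by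
  rw [← integral_sq_gaussianReal, ofReal_integral_eq_lintegral_ofReal
    (integrable_sq_gaussianReal 0 v) (.of_forall fun x => sq_nonneg x)]

lemma lintegral_logGap_sq_gaussianReal :
    ∫⁻ x, logGap (x ^ 2) ∂gaussianReal 0 1 = ENNReal.ofReal C1 := by
  have hne := ae_ne_zero_gaussianReal 0 one_ne_zero
  have hsq := integrable_sq_gaussianReal 0 1
  rw [← integral_sq_sub_one_sub_log_sq_gaussianReal, ofReal_integral_eq_lintegral_ofReal]
  · refine lintegral_congr_ae (hne.mono fun x hx => logGap_of_pos (by positivity))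
  · exact (hsq.sub (integrable_const 1)).sub (integrable_log_sq_gaussianReal 0 one_ne_zero)
  · exact hne.mono fun x hx => sub_one_sub_log_nonneg (by positivity)

lemma logGapLE_sq_gaussianReal (v : ℝ≥0) :
    LogGapLE (gaussianReal 0 v) (fun x => x ^ 2) v (ENNReal.ofReal C1) where
  measurable := by fun_prop
  nonneg x := sq_nonneg x
  mean_nonneg := v.coe_nonneg
  lintegral_eq := lintegral_ofReal_sq_gaussianReal v
  lintegral_logGap_le hv := by
    have hstd : (gaussianReal 0 v).map (· / √v) = gaussianReal 0 1 := by
      rw [gaussianReal_map_div_const, zero_div]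
      congr 1
      ext
      simp [hv.ne']
    rw [← lintegral_logGap_sq_gaussianReal, ← hstd, lintegral_map (by fun_prop) (by fun_prop)]
    simp [div_pow]

lemma logGapLE_sq_stdGaussian {E : Type*} [NormedAddCommGroup E] [InnerProductSpace ℝ E]
    [FiniteDimensional ℝ E] [MeasurableSpace E] [BorelSpace E] (L : StrongDual ℝ E) :
    LogGapLE (stdGaussian E) (fun x => L x ^ 2) (‖L‖ ^ 2) (ENNReal.ofReal C1) := by
  have hlaw : (stdGaussian E).map L = gaussianReal 0 (‖L‖₊ ^ 2) := by
    rw [IsGaussian.map_eq_gaussianReal, integral_strongDual_stdGaussian, variance_dual_stdGaussian]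
    congr 1
    ext
    simp
  have hsq := logGapLE_sq_gaussianReal (‖L‖₊ ^ 2)
  rw [← hlaw] at hsq
  simpa using hsq.of_map (by fun_prop)

variable {κ : Type*} [Fintype κ]

lemma logGapLE_sq_dotProduct (b : κ → ℝ) :
    LogGapLE (Measure.pi fun _ : κ => gaussianReal 0 1) (fun y => (b ⬝ᵥ y) ^ 2) (b ⬝ᵥ b)
      (ENNReal.ofReal C1) := by
  have hsq := logGapLE_sq_stdGaussian (InnerProductSpace.toDual ℝ _ (WithLp.toLp 2 b))
  rw [← map_pi_eq_stdGaussian] at hsq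
  have hmap := hsq.of_map (by fun_prop)
  simpa [EuclideanSpace.real_norm_sq_eq, PiLp.inner_apply, dotProduct, ← sq, mul_comm] using hmap

open scoped MatrixOrder in
lemma IsAccretive.exists_sum_sq {P : Matrix κ κ ℝ} (hP : IsAccretive P) :
    ∃ B : Matrix κ κ ℝ, (∀ y, y ⬝ᵥ P *ᵥ y = ∑ k, (B k ⬝ᵥ y) ^ 2) ∧
      P.trace = ∑ k, B k ⬝ᵥ B k := by
  set Q : Matrix κ κ ℝ := (1 / 2 : ℝ) • (P + Pᵀ) with hQ
  have hquad : ∀ y, y ⬝ᵥ Q *ᵥ y = y ⬝ᵥ P *ᵥ y := fun y => by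
    have htranspose : y ⬝ᵥ Pᵀ *ᵥ y = y ⬝ᵥ P *ᵥ y := by
      rw [mulVec_transpose, dotProduct_comm, dotProduct_mulVec]
    rw [hQ, smul_mulVec, add_mulVec, dotProduct_smul, dotProduct_add, htranspose, smul_eq_mul]
    ring
  have htrace : Q.trace = P.trace := by
    rw [hQ, trace_smul, trace_add, trace_transpose, smul_eq_mul]
    ring
  have hQ_psd : Q.PosSemidef := by
    refine .of_dotProduct_mulVec_nonneg ?_ fun y => ?_
    · ext i j
      simp [hQ, add_comm]
    · rw [star_trivial, hquad]
      exact hP y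
  classical
  obtain ⟨B, hB⟩ := CStarAlgebra.nonneg_iff_eq_star_mul_self.mp hQ_psd.nonneg
  rw [star_eq_conjTranspose, conjTranspose_eq_transpose_of_trivial] at hB
  refine ⟨B, fun y => ?_, ?_⟩
  · rw [← hquad, hB, ← mulVec_mulVec, dotProduct_mulVec, vecMul_transpose]
    simp [dotProduct, mulVec, sq]
  · rw [← htrace, hB, trace_mul_comm]
    simp [trace, Matrix.mul_apply, dotProduct]

lemma logGapLE_quadraticForm {P : Matrix κ κ ℝ} (hP : IsAccretive P) :
    LogGapLE (Measure.pi fun _ : κ => gaussianReal 0 1) (fun y => y ⬝ᵥ P *ᵥ y) P.trace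
      (ENNReal.ofReal C1) := by
  obtain ⟨B, hquad, htrace⟩ := hP.exists_sum_sq
  simpa only [hquad, htrace] using LogGapLE.sum _ fun k _ => logGapLE_sq_dotProduct (B k)

lemma logGapLE_quadraticForm_mulVec {ι : Type*} [Fintype ι] {P : Matrix ι ι ℝ}
    (hP : IsAccretive P) (T : Matrix ι κ ℝ) :
    LogGapLE (Measure.pi fun _ : κ => gaussianReal 0 1) (fun y => T *ᵥ y ⬝ᵥ P *ᵥ (T *ᵥ y))
      (P * (T * Tᵀ)).trace (ENNReal.ofReal C1) := by
  have hconj := logGapLE_quadraticForm (hP.transpose_mul_mul T)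
  simp only [dotProduct_transpose_mul_mul_mulVec] at hconj
  rwa [Matrix.mul_assoc, trace_mul_comm, Matrix.mul_assoc] at hconj

end Gaussian

/-! ### Matchings -/

section Matchings

variable {ι R : Type*} [LinearOrder ι]

/-- `M` is the edge set of a matching, an edge being encoded as its increasing pair of vertices. -/
def IsMatching (M : Finset (ι × ι)) : Prop :=
  (∀ p ∈ M, p.1 < p.2) ∧
    ∀ p ∈ M, ∀ q ∈ M, p ≠ q → p.1 ≠ q.1 ∧ p.1 ≠ q.2 ∧ p.2 ≠ q.1 ∧ p.2 ≠ q.2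

open Classical in
/-- The matchings of the complete graph on the vertex set `S`. -/
noncomputable def matchingsOn (S : Finset ι) : Finset (Finset (ι × ι)) :=
  {M ∈ (S ×ˢ S).powerset | IsMatching M}

lemma mem_matchingsOn {S : Finset ι} {M : Finset (ι × ι)} :
    M ∈ matchingsOn S ↔ M ⊆ S ×ˢ S ∧ IsMatching M := by
  simp [matchingsOn]

lemma matchingsOn_empty : matchingsOn (∅ : Finset ι) = {∅} := by
  ext M
  simp +contextual [mem_matchingsOn, IsMatching]

lemma notMem_of_mem_matchingsOn {S : Finset ι} {M : Finset (ι × ι)} (hM : M ∈ matchingsOn S)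
    {i : ι} (hi : i ∉ S) (j : ι) : (i, j) ∉ M := fun h =>
  hi (Finset.mem_product.mp ((mem_matchingsOn.mp hM).1 h)).1

lemma two_mul_card_le_of_mem_matchingsOn {S : Finset ι} {M : Finset (ι × ι)}
    (hM : M ∈ matchingsOn S) : 2 * M.card ≤ S.card := by
  obtain ⟨hsub, hlt, hdisj⟩ := mem_matchingsOn.mp hM
  have hvertices : (M.biUnion fun p => {p.1, p.2}).card = M.card * 2 := by
    rw [Finset.card_biUnion fun p hp q hq hpq => by
      simp [hdisj q hq p hp hpq.symm]]
    exact Finset.sum_const_nat fun p hp => Finset.card_pair (hlt p hp).ne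
  rw [mul_comm, ← hvertices]
  refine Finset.card_le_card (Finset.biUnion_subset.mpr fun p hp => ?_)
  have := Finset.mem_product.mp (hsub hp)
  grind

section Insert

variable {S : Finset ι} {i j : ι} {M : Finset (ι × ι)}

lemma insert_mem_matchingsOn_insert (hi : ∀ k ∈ S, i < k) (hj : j ∈ S)
    (hM : M ∈ matchingsOn (S.erase j)) : insert (i, j) M ∈ matchingsOn (insert i S) := by
  obtain ⟨hsub, hlt, hdisj⟩ := mem_matchingsOn.mp hM
  have hvertices : ∀ p ∈ M, p.1 ∈ S.erase j ∧ p.2 ∈ S.erase j := fun p hp =>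
    Finset.mem_product.mp (hsub hp)
  refine mem_matchingsOn.mpr ⟨fun p hp => ?_, ?_, ?_⟩
  all_goals grind

lemma erase_mem_matchingsOn_erase (hM : M ∈ matchingsOn (insert i S)) (hij : (i, j) ∈ M) :
    j ∈ S ∧ M.erase (i, j) ∈ matchingsOn (S.erase j) := by
  obtain ⟨hsub, hlt, hdisj⟩ := mem_matchingsOn.mp hM
  have hvertices : ∀ p ∈ M, p.1 ∈ insert i S ∧ p.2 ∈ insert i S := fun p hp =>
    Finset.mem_product.mp (hsub hp)
  refine ⟨by grind, mem_matchingsOn.mpr ⟨fun p hp => ?_, ?_, ?_⟩⟩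
  all_goals grind

lemma mem_matchingsOn_of_notMem (hi : ∀ k ∈ S, i < k) (hM : M ∈ matchingsOn (insert i S))
    (hiM : ∀ j, (i, j) ∉ M) : M ∈ matchingsOn S := by
  obtain ⟨hsub, hlt, hdisj⟩ := mem_matchingsOn.mp hM
  refine mem_matchingsOn.mpr ⟨fun p hp => ?_, hlt, hdisj⟩
  have hvertices := Finset.mem_product.mp (hsub hp)
  grind

lemma matchingsOn_insert (hi : ∀ k ∈ S, i < k) :
    matchingsOn (insert i S) =
      matchingsOn S ∪ S.biUnion fun j => (matchingsOn (S.erase j)).image (insert (i, j)) := by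
  ext M
  simp only [Finset.mem_union, Finset.mem_biUnion, Finset.mem_image]
  constructor
  · intro hM
    by_cases hiM : ∃ j, (i, j) ∈ M
    · obtain ⟨j, hij⟩ := hiM
      obtain ⟨hj, herase⟩ := erase_mem_matchingsOn_erase hM hij
      exact .inr ⟨j, hj, _, herase, Finset.insert_erase hij⟩
    · exact .inl (mem_matchingsOn_of_notMem hi hM (not_exists.mp hiM))
  · rintro (hM | ⟨j, hj, M, hM, rfl⟩)
    · obtain ⟨hsub, hmatching⟩ := mem_matchingsOn.mp hM
      have hS := Finset.subset_insert i S
      exact mem_matchingsOn.mpr ⟨hsub.trans (Finset.product_subset_product hS hS), hmatching⟩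
    · exact insert_mem_matchingsOn_insert hi hj hM

lemma sum_matchingsOn_insert {α : Type*} [AddCommMonoid α] (hi : ∀ k ∈ S, i < k)
    (f : Finset (ι × ι) → α) :
    ∑ M ∈ matchingsOn (insert i S), f M =
      ∑ M ∈ matchingsOn S, f M
        + ∑ j ∈ S, ∑ M ∈ matchingsOn (S.erase j), f (insert (i, j) M) := by
  have hiS : i ∉ S := fun h => (hi i h).false
  have hnew : ∀ {j k M}, M ∈ matchingsOn (S.erase j) → (i, k) ∉ M := fun hM =>
    notMem_of_mem_matchingsOn hM (fun h => hiS (Finset.mem_of_mem_erase h)) _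
  rw [matchingsOn_insert hi, Finset.sum_union, Finset.sum_biUnion]
  · congr 1
    refine Finset.sum_congr rfl fun j _ => Finset.sum_image fun M hM M' hM' h => ?_
    rw [← Finset.erase_insert (hnew hM), h, Finset.erase_insert (hnew hM')]
  · refine fun j _ k _ hjk => Finset.disjoint_left.mpr fun M hMj hMk => ?_
    obtain ⟨M₁, _, rfl⟩ := Finset.mem_image.mp hMj
    obtain ⟨M₂, hM₂, h⟩ := Finset.mem_image.mp hMk
    have hmem : (i, j) ∈ insert (i, k) M₂ := h ▸ Finset.mem_insert_self _ _
    simp [hjk, hnew hM₂] at hmem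
  · refine Finset.disjoint_left.mpr fun M hM hM' => ?_
    obtain ⟨j, _, hM'⟩ := Finset.mem_biUnion.mp hM'
    obtain ⟨M, _, rfl⟩ := Finset.mem_image.mp hM'
    exact notMem_of_mem_matchingsOn hM hiS j (Finset.mem_insert_self _ _)

end Insert

variable [CommSemiring R]

/-- The homogeneous weighted matching polynomial of the complete graph on `S`: a matching
contributes the product of its edge weights times one factor `s` for each unmatched vertex. -/
noncomputable def matchingPoly (s : R) (w : ι → ι → R) (S : Finset ι) : R :=
  ∑ M ∈ matchingsOn S, (∏ p ∈ M, w p.1 p.2) * s ^ (S.card - 2 * M.card)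

lemma matchingPoly_empty (s : R) (w : ι → ι → R) : matchingPoly s w ∅ = 1 := by
  simp [matchingPoly, matchingsOn_empty]

lemma matchingPoly_insert (s : R) (w : ι → ι → R) {S : Finset ι} {i : ι}
    (hi : ∀ k ∈ S, i < k) :
    matchingPoly s w (insert i S) =
      s * matchingPoly s w S + ∑ j ∈ S, w i j * matchingPoly s w (S.erase j) := by
  have hiS : i ∉ S := fun h => (hi i h).false
  simp only [matchingPoly, sum_matchingsOn_insert hi, Finset.mul_sum,
    Finset.card_insert_of_notMem hiS]
  congr 1
  · refine Finset.sum_congr rfl fun M hM => ?_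
    rw [Nat.sub_add_comm (two_mul_card_le_of_mem_matchingsOn hM), pow_succ']
    ring
  · refine Finset.sum_congr rfl fun j hj => Finset.sum_congr rfl fun M hM => ?_
    have hijM := notMem_of_mem_matchingsOn hM (fun h => hiS (Finset.mem_of_mem_erase h)) j
    have hunmatched : S.card + 1 - 2 * (M.card + 1) = S.card - 1 - 2 * M.card := by lia
    rw [Finset.prod_insert hijM, Finset.card_insert_of_notMem hijM, Finset.card_erase_of_mem hj,
      hunmatched, mul_assoc]

end Matchings

section MatchingPolynomial

variable {N : ℕ}

lemma phiW_eq_sum_matchingsOn (A : Matrix (Fin N) (Fin N) ℝ) (k : ℕ) :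
    phiW A k = ∑ M ∈ matchingsOn Finset.univ with M.card = k, ∏ p ∈ M, A p.1 p.2 ^ 2 := by
  refine Finset.sum_congr (Finset.ext fun M => ?_) fun _ _ => rfl
  simp [mem_matchingsOn, IsMatching]

lemma sqrt_pow_sub_two_mul {t : ℝ} (ht : 0 ≤ t) {k : ℕ} (hk : k ≤ N / 2) :
    √t ^ (N - 2 * k) = (if Even N then 1 else √t) * t ^ (N / 2 - k) := by
  have hsq : t ^ (N / 2 - k) = √t ^ (2 * (N / 2 - k)) := by rw [pow_mul, Real.sq_sqrt ht]
  rw [hsq]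
  split_ifs with hN
  · rw [one_mul]
    grind
  · rw [← pow_succ']
    grind

lemma PhiFull_eq_matchingPoly (A : Matrix (Fin N) (Fin N) ℝ) {t : ℝ} (ht : 0 ≤ t) :
    PhiFull A t = matchingPoly (√t) (fun i j => A i j ^ 2) Finset.univ := by
  have hcard : ∀ M ∈ matchingsOn (Finset.univ : Finset (Fin N)),
      M.card ∈ Finset.range (N / 2 + 1) := fun M hM => by
    have hle := two_mul_card_le_of_mem_matchingsOn hM
    rw [Finset.card_fin] at hle
    rw [Finset.mem_range]
    lia
  rw [matchingPoly, ← Finset.sum_fiberwise_of_maps_to hcard, PhiFull, PhiW, Finset.mul_sum]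
  refine Finset.sum_congr rfl fun k hk => ?_
  rw [phiW_eq_sum_matchingsOn, mul_left_comm,
    ← sqrt_pow_sub_two_mul ht (Nat.le_of_lt_succ (Finset.mem_range.mp hk)), Finset.sum_mul]
  refine Finset.sum_congr rfl fun M hM => ?_
  rw [(Finset.mem_filter.mp hM).2, Finset.card_fin]

end MatchingPolynomial

/-! ### Random principal minors -/

section RandomMinors

open scoped ENNReal

variable {N : ℕ} {A : Matrix (Fin N) (Fin N) ℝ} {s : ℝ} {S : Finset (Fin N)} {i : Fin N}

instance isProbabilityMeasure_gaussPi : IsProbabilityMeasure (gaussPi N) := by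
  unfold gaussPi
  infer_instance

lemma sampleY_transpose (hA : Aᵀ = -A) (ξ : PairIdx N → ℝ) :
    (sampleY A ξ)ᵀ = -sampleY A ξ := by
  have hskew : ∀ i j, A j i = -A i j := fun i j => congrFun (congrFun hA i) j
  ext i j
  rcases lt_trichotomy i j with h | rfl | h
  · simp [sampleY, h, h.not_gt, hskew i j]
  · simp [sampleY]
  · simp [sampleY, h, h.not_gt, hskew i j]

/-- The principal minor of `s • 1 + Y_A(ξ)` on the index set `S`. -/
noncomputable def sampleMinor (s : ℝ) (A : Matrix (Fin N) (Fin N) ℝ) (S : Finset (Fin N))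
    (ξ : PairIdx N → ℝ) : ℝ :=
  (principalCut (s • 1 + sampleY A ξ) S).det

@[fun_prop]
lemma measurable_sampleMinor (s : ℝ) (A : Matrix (Fin N) (Fin N) ℝ) (S : Finset (Fin N)) :
    Measurable (sampleMinor s A S) := by
  refine (Continuous.matrix_det (continuous_matrix fun i j => ?_)).measurable
  simp only [principalCut, sampleY, of_apply, Matrix.add_apply]
  split_ifs <;> fun_prop

lemma sampleMinor_empty (s : ℝ) (A : Matrix (Fin N) (Fin N) ℝ) (ξ : PairIdx N → ℝ) :
    sampleMinor s A ∅ ξ = 1 := by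
  rw [sampleMinor, principalCut_empty, det_one]

lemma isAccretive_principalCut_smul_one_add_sampleY (hs : 0 ≤ s) (hA : Aᵀ = -A)
    (S : Finset (Fin N)) (ξ : PairIdx N → ℝ) :
    IsAccretive (principalCut (s • 1 + sampleY A ξ) S) :=
  ((IsAccretive.one.smul hs).add (.of_transpose_eq_neg (sampleY_transpose hA ξ))).principalCut S

/-- The coordinates of the entries `(i, j)` with `j ∈ S`. -/
def rowPairs (i : Fin N) (S : Finset (Fin N)) : Finset (PairIdx N) :=
  {p | p.1.1 = i ∧ p.1.2 ∈ S}

/-- The matrix which maps the coordinates `rowPairs i S` to row `i` of `Y_A` restricted to `S`. -/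
def rowCoeff (A : Matrix (Fin N) (Fin N) ℝ) (i : Fin N) (S : Finset (Fin N)) :
    Matrix (Fin N) (rowPairs i S) ℝ :=
  of fun j p => if p.1.1.2 = j then A i j else 0

lemma sum_rowPairs_ite {α : Type*} [AddCommMonoid α] (hi : ∀ k ∈ S, i < k) (j : Fin N)
    (f : rowPairs i S → α) :
    ∑ p, (if p.1.1.2 = j then f p else 0) =
      if hj : j ∈ S then f ⟨⟨(i, j), hi j hj⟩, by simp [rowPairs, hj]⟩ else 0 := by
  split_ifs with hj
  · rw [Fintype.sum_eq_single ⟨⟨(i, j), hi j hj⟩, by simp [rowPairs, hj]⟩, if_pos rfl]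
    rintro ⟨⟨⟨a, b⟩, hab⟩, hp⟩ hne
    obtain ⟨rfl, -⟩ : a = i ∧ b ∈ S := by simpa [rowPairs] using hp
    exact if_neg (by rintro rfl; exact hne rfl)
  · refine Fintype.sum_eq_zero _ fun p => if_neg ?_
    have hp : p.1.1.2 ∈ S := (Finset.mem_filter.mp p.2).2.2
    exact ne_of_mem_of_not_mem hp hj

lemma rowCoeff_mulVec (hi : ∀ k ∈ S, i < k) (ξ : PairIdx N → ℝ) (y : rowPairs i S → ℝ) :
    rowCoeff A i S *ᵥ y =
      S.piecewise (sampleY A (Function.updateFinset ξ (rowPairs i S) y) i) 0 := by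
  ext j
  simp only [rowCoeff, mulVec, dotProduct, of_apply, ite_mul, zero_mul]
  rw [sum_rowPairs_ite hi j fun p => A i j * y p]
  by_cases hj : j ∈ S
  · simp [sampleY, hi j hj, hj, Function.updateFinset, rowPairs]
  · simp [hj]

lemma rowCoeff_mul_transpose (hi : ∀ k ∈ S, i < k) :
    rowCoeff A i S * (rowCoeff A i S)ᵀ = diagonal (S.piecewise (fun j => A i j ^ 2) 0) := by
  ext j k
  simp only [rowCoeff, Matrix.mul_apply, transpose_apply, of_apply, ite_mul, zero_mul]
  rw [sum_rowPairs_ite hi j fun p => A i j * if p.1.1.2 = k then A i k else 0]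
  rcases eq_or_ne j k with rfl | hjk
  · simp [Finset.piecewise, sq]
  · simp [hjk]

lemma principalCut_sampleY_updateFinset (hi : i ∉ S) (s : ℝ) (A : Matrix (Fin N) (Fin N) ℝ)
    (T : Finset (Fin N)) (ξ : PairIdx N → ℝ) (y : rowPairs i T → ℝ) :
    principalCut (s • 1 + sampleY A (Function.updateFinset ξ (rowPairs i T) y)) S =
      principalCut (s • 1 + sampleY A ξ) S := by
  refine principalCut_congr fun a ha b hb => ?_
  have hai : a ≠ i := ne_of_mem_of_not_mem ha hi
  have hbi : b ≠ i := ne_of_mem_of_not_mem hb hi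
  simp [sampleY, Function.updateFinset, rowPairs, hai, hbi]

lemma sampleMinor_insert_updateFinset (hA : Aᵀ = -A) (hi : ∀ k ∈ S, i < k) (ξ : PairIdx N → ℝ)
    (y : rowPairs i S → ℝ) :
    sampleMinor s A (insert i S) (Function.updateFinset ξ (rowPairs i S) y) =
      s * sampleMinor s A S ξ + rowCoeff A i S *ᵥ y ⬝ᵥ
        (principalCut (s • 1 + sampleY A ξ) S).adjugate *ᵥ (rowCoeff A i S *ᵥ y) := by
  have hiS : i ∉ S := fun h => (hi i h).false
  rw [sampleMinor, det_principalCut_smul_one_add_insert (sampleY_transpose hA _) s hiS,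
    principalCut_sampleY_updateFinset hiS, rowCoeff_mulVec hi ξ, sampleMinor]

lemma trace_adjugate_mul_rowCoeff (hi : ∀ k ∈ S, i < k) (ξ : PairIdx N → ℝ) :
    ((principalCut (s • 1 + sampleY A ξ) S).adjugate
        * (rowCoeff A i S * (rowCoeff A i S)ᵀ)).trace =
      ∑ j ∈ S, A i j ^ 2 * sampleMinor s A (S.erase j) ξ := by
  simp [rowCoeff_mul_transpose hi, trace, mul_diagonal, adjugate_principalCut_apply_self,
    sampleMinor, Finset.piecewise, mul_comm]

lemma logGapLE_sampleMinor_insert_updateFinset (hs : 0 ≤ s) (hA : Aᵀ = -A)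
    (hi : ∀ k ∈ S, i < k) (ξ : PairIdx N → ℝ) :
    LogGapLE (Measure.pi fun _ : rowPairs i S => gaussianReal 0 1)
      (fun y => sampleMinor s A (insert i S) (Function.updateFinset ξ (rowPairs i S) y))
      (s * sampleMinor s A S ξ + ∑ j ∈ S, A i j ^ 2 * sampleMinor s A (S.erase j) ξ)
      (ENNReal.ofReal C1) := by
  have hacc := isAccretive_principalCut_smul_one_add_sampleY hs hA S ξ
  simp only [sampleMinor_insert_updateFinset hA hi, ← trace_adjugate_mul_rowCoeff hi]
  exact ((LogGapLE.const (mul_nonneg hs hacc.det_nonneg)).mono zero_le).add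
    (logGapLE_quadraticForm_mulVec hacc.adjugate _)

lemma logGapLE_sampleMinor_singleton (hs : 0 ≤ s) (hA : Aᵀ = -A) (i : Fin N) :
    LogGapLE (gaussPi N) (sampleMinor s A {i}) s 0 := by
  have hconst : sampleMinor s A {i} = fun _ => s := funext fun ξ => by
    have hinsert := det_principalCut_smul_one_add_insert (sampleY_transpose hA ξ) s
      (Finset.notMem_empty i)
    simpa [principalCut_empty, sampleMinor] using hinsert
  exact hconst ▸ .const hs

theorem logGapLE_sampleMinor (hs : 0 ≤ s) (hA : Aᵀ = -A) (S : Finset (Fin N)) :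
    LogGapLE (gaussPi N) (sampleMinor s A S) (matchingPoly s (fun i j => A i j ^ 2) S)
      ((S.card - 1 : ℕ) * ENNReal.ofReal C1) := by
  induction S using Finset.strongInduction with
  | H S ih =>
  rcases S.eq_empty_or_nonempty with rfl | hS
  · simpa [funext (sampleMinor_empty s A), matchingPoly_empty] using
      LogGapLE.const (μ := gaussPi N) zero_le_one
  obtain ⟨i, S, rfl, hi⟩ : ∃ i T, insert i T = S ∧ ∀ k ∈ T, i < k :=
    ⟨S.min' hS, S.erase (S.min' hS), Finset.insert_erase (S.min'_mem hS),
      fun k hk => S.min'_lt_of_mem_erase_min' hS hk⟩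
  rw [matchingPoly_insert s _ hi]
  rcases S.eq_empty_or_nonempty with rfl | hS'
  · simpa [matchingPoly_empty] using logGapLE_sampleMinor_singleton hs hA i
  have hiS : i ∉ S := fun h => (hi i h).false
  have hlt : S ⊂ insert i S := Finset.ssubset_insert hiS
  have hmean : LogGapLE (gaussPi N)
      (fun ξ => s * sampleMinor s A S ξ + ∑ j ∈ S, A i j ^ 2 * sampleMinor s A (S.erase j) ξ) _
      ((S.card - 1 : ℕ) * ENNReal.ofReal C1) :=
    ((ih S hlt).const_mul hs).add <| LogGapLE.sum S fun j _ =>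
      ((ih (S.erase j) ((S.erase_subset j).trans_ssubset hlt)).mono
        (by gcongr; exact S.erase_subset j)).const_mul (sq_nonneg (A i j))
  refine (hmean.of_updateFinset (rowPairs i S) (measurable_sampleMinor s A _)
    (logGapLE_sampleMinor_insert_updateFinset hs hA hi)).mono (le_of_eq ?_)
  have hcard : (insert i S).card - 1 = (S.card - 1) + 1 := by
    rw [Finset.card_insert_of_notMem hiS, Nat.add_sub_cancel, Nat.sub_add_cancel hS'.card_pos]
  rw [hcard, Nat.cast_succ, add_one_mul]

end RandomMinors

/-- for a nonzero skew-symmetric `A` and `t ≥ 0`,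
`log Φ(t,A) ≤ log Φ̃(t,A) + (N-1) C₁`, where for `N` odd `Φ(t,A)` is replaced by
`√t·Φ(t,A)`. -/
theorem log_matching_polynomial_le_logPhiTilde_add
    {N : ℕ} (A : Matrix (Fin N) (Fin N) ℝ) (hA : Aᵀ = -A) (hA0 : A ≠ 0)
    (t : ℝ) (ht : 0 ≤ t) :
    Real.log (PhiFull A t) ≤ logPhiTilde t A + ((N : ℝ) - 1) * C1 := by
  have hN : 1 ≤ N := by
    by_contra! hN
    obtain rfl : N = 0 := by lia
    exact hA0 (Subsingleton.elim _ _)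
  have hgap := logGapLE_sampleMinor (Real.sqrt_nonneg t) hA Finset.univ
  have hlog := hgap.log_le_integral_log_add (by finiteness)
  rw [Finset.card_fin, ENNReal.toReal_mul, ENNReal.toReal_natCast, Nat.cast_sub hN, Nat.cast_one,
    ENNReal.toReal_ofReal C1_nonneg] at hlog
  simpa only [PhiFull_eq_matchingPoly A ht, logPhiTilde, sampleMinor, principalCut_univ] using hlog
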